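/- Let n, m ≥ 4 be integers and let G = P_n □ P_m be the grid. If a and b are integers with 2 ≤ a ≤ n−1 and 2 ≤ b ≤ m−1, then ab ∈ S_SC(G). -/

import Mathlib

/-!  Common definitions: oriented graphs, geodesic convexity, convexity number,
strong convexity spectrum, and grid graphs. -/

variable {V : Type*}

/-- A directed walk of length `k` from `u` to `v` along the arc relation `A`,
encoded by the function `f` listing its vertices. -/
def IsDirWalk (A : V → V → Prop) (k : ℕ) (f : ℕ → V) (u v : V) : Prop :=
  f 0 = u ∧ f k = v ∧ ∀ i, i < k → A (f i) (f (i + 1))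

/-- There is a directed walk from `u` to `v`. -/
def DirReachable (A : V → V → Prop) (u v : V) : Prop :=
  ∃ k f, IsDirWalk A k f u v

/-- A digraph (given by its arc relation) is strongly connected. -/
def StrongConnected (A : V → V → Prop) : Prop :=
  ∀ u v : V, DirReachable A u v

/-- A `uv`-geodesic: a directed walk from `u` to `v` of minimum possible length
(such a walk is automatically a directed path). -/
def IsGeodesic (A : V → V → Prop) (k : ℕ) (f : ℕ → V) (u v : V) : Prop :=
  IsDirWalk A k f u v ∧ ∀ k' f', IsDirWalk A k' f' u v → k ≤ k'

/-- A nonempty vertex set `C` is convex if every vertex lying on a geodesic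
between two vertices of `C` (in either direction) belongs to `C`. -/
def DConvex (A : V → V → Prop) (C : Set V) : Prop :=
  C.Nonempty ∧ ∀ u ∈ C, ∀ v ∈ C, ∀ k f, IsGeodesic A k f u v → ∀ i ≤ k, f i ∈ C

/-- `A` is an orientation of the simple graph `G`: every arc is along an edge,
every edge gets an arc, and no edge gets both directions. -/
def IsOrientation (G : SimpleGraph V) (A : V → V → Prop) : Prop :=
  (∀ x y, A x y → G.Adj x y) ∧ (∀ x y, G.Adj x y → A x y ∨ A y x) ∧
    (∀ x y, A x y → ¬ A y x)

/-- The convexity number of a digraph: the maximum cardinality of a proper convex set. -/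
noncomputable def convexityNumber [Fintype V] (A : V → V → Prop) : ℕ :=
  sSup {k | ∃ C : Set V, DConvex A C ∧ C ≠ Set.univ ∧ C.ncard = k}

/-- The strong convexity spectrum of a graph: the set of convexity numbers of
its strongly connected orientations. -/
def strongConvexitySpectrum [Fintype V] (G : SimpleGraph V) : Set ℕ :=
  {k | ∃ A : V → V → Prop, IsOrientation G A ∧ StrongConnected A ∧ convexityNumber A = k}

/-- The grid graph `P_n □ P_m`. -/
def gridGraph (n m : ℕ) : SimpleGraph (Fin n × Fin m) :=
  (SimpleGraph.pathGraph n).boxProd (SimpleGraph.pathGraph m)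

/-!
Write `a = r + 1` and `b = c + 1`, and let `R` be the `a × b` rectangle `Set.Iic (r, c)` in a corner
of the grid. Orient the edges so that on a directed walk horizontal and vertical steps alternate as
long as the walk stays inside `R` or outside it. Inside `R` every walk that alternates is available,
up to the turns forced at the sides of `R`, and crossing the boundary only costs time: a walk that
leaves `R` and returns is at least two steps longer than a suitable walk within `R`. So `R` is
convex.

Conversely, every unit square that does not straddle a side of `R` is a directed 4-cycle, so a
convex set that contains two adjacent corners of such a square contains the whole square. Squares
then spread to their neighbours, and a convex set contained neither in `R` nor in the unit square at
the corner `(r, c)` of `R` is forced to be the whole grid; hence no proper convex set has more than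
`ab` elements. Strong components spread over squares in the same way, which makes the orientation
strongly connected.
-/

section Digraph

variable {A : V → V → Prop} {C : Set V} {k : ℕ} {f : ℕ → V} {u v w x y z : V}

theorem IsDirWalk.nil (A : V → V → Prop) (u : V) : IsDirWalk A 0 (fun _ => u) u u :=
  ⟨rfl, rfl, fun _ hi => absurd hi (Nat.not_lt_zero _)⟩

theorem IsDirWalk.cons (h : A u v) (hf : IsDirWalk A k f v w) :
    IsDirWalk A (k + 1) (fun i => Nat.casesOn i u f) u w := by
  refine ⟨rfl, hf.2.1, ?_⟩
  rintro (_ | i) hi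
  · change A u (f 0)
    rwa [hf.1]
  · exact hf.2.2 i (Nat.lt_of_succ_lt_succ hi)

theorem IsDirWalk.eq_of_zero (h : IsDirWalk A 0 f u v) : u = v :=
  h.1.symm.trans h.2.1

theorem IsDirWalk.head (h : IsDirWalk A (k + 1) f u v) : A u (f 1) :=
  h.1 ▸ h.2.2 0 k.succ_pos

theorem IsDirWalk.tail (h : IsDirWalk A (k + 1) f u v) :
    IsDirWalk A k (fun i => f (i + 1)) (f 1) v :=
  ⟨rfl, h.2.1, fun i hi => h.2.2 (i + 1) (Nat.succ_lt_succ hi)⟩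

theorem IsDirWalk.last (h : IsDirWalk A (k + 1) f u v) : A (f k) v :=
  h.2.1 ▸ h.2.2 k k.lt_succ_self

theorem IsDirWalk.arc_of_one (h : IsDirWalk A 1 f u v) : A u v :=
  h.2.1 ▸ h.head

theorem IsDirWalk.even_iff {c : V → Bool} (hc : ∀ x y, A x y → c x ≠ c y)
    (h : IsDirWalk A k f u v) : Even k ↔ c u = c v := by
  induction k generalizing f u with
  | zero => simp [h.eq_of_zero]
  | succ k ih =>
    have hne := hc _ _ h.head
    rw [Nat.even_add_one, ih h.tail]
    revert hne
    generalize c u = s, c v = t, c (f 1) = l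
    revert s t l
    decide

theorem dirReachable_iff_reflTransGen : DirReachable A u v ↔ Relation.ReflTransGen A u v := by
  constructor
  · rintro ⟨k, f, hf⟩
    induction k generalizing f u with
    | zero => rw [hf.eq_of_zero]
    | succ k ih => exact .head hf.head (ih _ hf.tail)
  · intro h
    induction h using Relation.ReflTransGen.head_induction_on with
    | refl => exact ⟨0, _, .nil A v⟩
    | head h _ ih =>
      obtain ⟨k, f, hf⟩ := ih
      exact ⟨k + 1, _, hf.cons h⟩

theorem DirReachable.exists_isGeodesic (h : DirReachable A u v) : ∃ k f, IsGeodesic A k f u v := by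
  classical
  obtain ⟨f, hf⟩ := Nat.find_spec h
  exact ⟨Nat.find h, f, hf, fun k' f' hf' => Nat.find_min' h ⟨f', hf'⟩⟩

theorem DConvex.exists_arc_from (hC : DConvex A C) (hA : StrongConnected A) (hnt : C.Nontrivial)
    (hu : u ∈ C) : ∃ v ∈ C, A u v := by
  obtain ⟨w, hw, hwu⟩ := hnt.exists_ne u
  obtain ⟨_ | k, f, hf⟩ := (hA u w).exists_isGeodesic
  · exact absurd hf.1.eq_of_zero.symm hwu
  · exact ⟨f 1, hC.2 u hu w hw _ f hf 1 (Nat.le_add_left 1 k), hf.1.head⟩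

theorem DConvex.exists_arc_to (hC : DConvex A C) (hA : StrongConnected A) (hnt : C.Nontrivial)
    (hu : u ∈ C) : ∃ v ∈ C, A v u := by
  obtain ⟨w, hw, hwu⟩ := hnt.exists_ne u
  obtain ⟨_ | k, f, hf⟩ := (hA w u).exists_isGeodesic
  · exact absurd hf.1.eq_of_zero hwu
  · exact ⟨f k, hC.2 w hw u hu _ f hf k (Nat.le_add_right k 1), hf.1.last⟩

/-- The closure properties of a vertex set that are used to fill regions of the grid. They are
shared by convex sets and by strong components, so that one filling argument serves both the
convexity number and strong connectivity. -/
structure SquareClosed (A : V → V → Prop) (C : Set V) : Prop where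
  mem_of_path {x y z : V} : A x y → A y z → x ≠ z → x ∈ C → z ∈ C → y ∈ C
  mem_of_square {x y z w : V} : A x y → A y z → A z w → A w x → x ∈ C → y ∈ C → z ∈ C ∧ w ∈ C

/-- The strong component of `u`: the vertices that reach `u` and are reached from it. -/
def strongComponent (A : V → V → Prop) (u : V) : Set V :=
  {v | Relation.ReflTransGen A u v ∧ Relation.ReflTransGen A v u}

theorem squareClosed_strongComponent (A : V → V → Prop) (u : V) :
    SquareClosed A (strongComponent A u) where
  mem_of_path hxy hyz _ hx hz := ⟨hx.1.tail hxy, .head hyz hz.2⟩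
  mem_of_square _ hyz hzw hwx hx hy :=
    ⟨⟨hy.1.tail hyz, .head hzw (.head hwx hx.2)⟩, ⟨(hy.1.tail hyz).tail hzw, .head hwx hx.2⟩⟩

theorem mem_strongComponent_of_square (hxy : A x y) (hyz : A y z) (hzw : A z w) (hwx : A w x) :
    y ∈ strongComponent A x :=
  ⟨.single hxy, .head hyz (.head hzw (.single hwx))⟩

theorem strongConnected_of_strongComponent_eq_univ (h : strongComponent A u = Set.univ) :
    StrongConnected A := fun x y =>
  have hmem : ∀ v, v ∈ strongComponent A u := Set.eq_univ_iff_forall.1 h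
  dirReachable_iff_reflTransGen.2 ((hmem x).2.trans (hmem y).1)

theorem DConvex.squareClosed {c : V → Bool} (hc : ∀ x y, A x y → c x ≠ c y)
    (hA : ∀ x y, A x y → ¬ A y x) (hC : DConvex A C) : SquareClosed A C where
  mem_of_path {x y z} hxy hyz hxz hx hz := by
    have hf := ((IsDirWalk.nil A z).cons hyz).cons hxy
    refine hC.2 x hx z hz 2 _ ⟨hf, fun l g hg => ?_⟩ 1 one_le_two
    have hl : Even l := (hg.even_iff hc).2 ((hf.even_iff hc).1 even_two)
    have hl₀ : l ≠ 0 := by rintro rfl; exact hxz hg.eq_of_zero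
    grind
  mem_of_square {x y z w} hxy hyz hzw hwx hx hy := by
    have hf := (((IsDirWalk.nil A x).cons hwx).cons hzw).cons hyz
    have hgeo : IsGeodesic A 3 _ y x := ⟨hf, fun l g hg => by
      have hl : ¬ Even l := by rw [hg.even_iff hc, ← hf.even_iff hc]; decide
      have hl₁ : l ≠ 1 := by rintro rfl; exact hA x y hxy hg.arc_of_one
      grind⟩
    exact ⟨hC.2 y hy x hx 3 _ hgeo 1 (by norm_num), hC.2 y hy x hx 3 _ hgeo 2 (by norm_num)⟩

theorem DConvex.mem_of_four_path {c : V → Bool} {s t : V} (hc : ∀ x y, A x y → c x ≠ c y)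
    (hC : DConvex A C) (hxy : A x y) (hyz : A y z) (hzs : A z s) (hst : A s t) (hxt : x ≠ t)
    (hno : ∀ u, A x u → ¬ A u t) (hx : x ∈ C) (ht : t ∈ C) : y ∈ C ∧ s ∈ C := by
  have hf := ((((IsDirWalk.nil A t).cons hst).cons hzs).cons hyz).cons hxy
  have hgeo : IsGeodesic A 4 _ x t := ⟨hf, fun l g hg => by
    have hl : Even l := by rw [hg.even_iff hc, ← hf.even_iff hc]; decide
    have hl₀ : l ≠ 0 := by rintro rfl; exact hxt hg.eq_of_zero
    have hl₂ : l ≠ 2 := by rintro rfl; exact hno _ hg.head hg.tail.arc_of_one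
    grind⟩
  exact ⟨hC.2 x hx t ht 4 _ hgeo 1 (by norm_num), hC.2 x hx t ht 4 _ hgeo 3 (by norm_num)⟩

end Digraph

section Orientation

variable {r c i j : ℕ} {p q s : ℕ × ℕ}

/-- Adjacency in the square lattice `ℕ × ℕ`. -/
def LatticeAdj (p q : ℕ × ℕ) : Prop :=
  p.1 = q.1 ∧ (p.2 = q.2 + 1 ∨ q.2 = p.2 + 1) ∨ p.2 = q.2 ∧ (p.1 = q.1 + 1 ∨ q.1 = p.1 + 1)

/-- The lattice points whose horizontal arcs leave them and whose vertical arcs enter them; at the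
other points it is the other way round. The points form a checkerboard whose two colours are
exchanged outside the rectangle `Set.Iic (r, c)`. -/
def EmitsHorizontally (r c : ℕ) (p : ℕ × ℕ) : Prop :=
  (p.1 + p.2 + r + c) % 2 = 0 ↔ p.1 ≤ r ∧ p.2 ≤ c

/-- The arcs of the orientation of the lattice. The endpoints of an edge that crosses the boundary
of the rectangle `Set.Iic (r, c)` disagree about its direction, and the outer one, which is the
larger one, prevails. -/
def GridArc (r c : ℕ) (p q : ℕ × ℕ) : Prop :=
  LatticeAdj p q ∧
    (EmitsHorizontally r c (max p.1 q.1, max p.2 q.2) ↔ q.2 < p.2 ∨ p.1 < q.1)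

theorem GridArc.emitsHorizontally_of_same_side (h : GridArc r c p q)
    (hpq : p ∈ Set.Iic (r, c) ↔ q ∈ Set.Iic (r, c)) :
    EmitsHorizontally r c p ∧ p.1 = q.1 ∨ ¬ EmitsHorizontally r c p ∧ p.2 = q.2 := by
  simp only [Set.mem_Iic, Prod.le_def] at hpq
  unfold GridArc LatticeAdj EmitsHorizontally at *
  omega

theorem GridArc.emitsHorizontally_iff_not (h : GridArc r c p q)
    (hpq : p ∈ Set.Iic (r, c) ↔ q ∈ Set.Iic (r, c)) :
    EmitsHorizontally r c p ↔ ¬ EmitsHorizontally r c q := by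
  have hadj := h.1
  simp only [Set.mem_Iic, Prod.le_def] at hpq
  unfold LatticeAdj EmitsHorizontally at *
  omega

theorem LatticeAdj.gridArc_iff_of_mem (h : LatticeAdj p q) (hp : p ∈ Set.Iic (r, c))
    (hq : q ∈ Set.Iic (r, c)) :
    GridArc r c p q ↔ (EmitsHorizontally r c p ↔ p.1 = q.1) := by
  simp only [Set.mem_Iic, Prod.le_def] at hp hq
  unfold GridArc LatticeAdj EmitsHorizontally at *
  omega

theorem LatticeAdj.symm (h : LatticeAdj p q) : LatticeAdj q p := by
  unfold LatticeAdj at *; omega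

theorem LatticeAdj.gridArc_or_gridArc (h : LatticeAdj p q) : GridArc r c p q ∨ GridArc r c q p := by
  unfold GridArc LatticeAdj EmitsHorizontally at *
  omega

theorem GridArc.asymm (h : GridArc r c p q) : ¬ GridArc r c q p := by
  unfold GridArc LatticeAdj EmitsHorizontally at *
  omega

theorem LatticeAdj.gridArc_iff_of_outer (h : LatticeAdj p q) (hp : r < p.1 ∨ c < p.2) :
    GridArc r c p q ↔ (EmitsHorizontally r c p ↔ p.1 = q.1) := by
  unfold GridArc LatticeAdj EmitsHorizontally at *
  omega

theorem LatticeAdj.gridArc_to_iff_of_outer (h : LatticeAdj p q) (hp : r < p.1 ∨ c < p.2) :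
    GridArc r c q p ↔ (EmitsHorizontally r c p ↔ p.2 = q.2) := by
  unfold GridArc LatticeAdj EmitsHorizontally at *
  omega

/-- The unit square with least corner `(i, j)`. -/
def cell (i j : ℕ) : Set (ℕ × ℕ) :=
  Set.Icc (i, j) (i + 1, j + 1)

theorem mem_cell : p ∈ cell i j ↔ (i ≤ p.1 ∧ j ≤ p.2) ∧ p.1 ≤ i + 1 ∧ p.2 ≤ j + 1 :=
  Iff.rfl

/-- The opposite corner of the unit square `cell i j`. -/
def antipode (i j : ℕ) (p : ℕ × ℕ) : ℕ × ℕ :=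
  (2 * i + 1 - p.1, 2 * j + 1 - p.2)

/-- The unit squares bounded by a directed cycle: all but those that straddle a side of the
rectangle `Set.Iic (r, c)`. -/
def CyclicCell (r c i j : ℕ) : Prop :=
  i < r ∧ j < c ∨ r < i ∨ c < j ∨ i = r ∧ j = c

theorem antipode_mem_cell (hp : p ∈ cell i j) : antipode i j p ∈ cell i j := by
  simp only [mem_cell, antipode] at *
  omega

theorem antipode_antipode (hp : p ∈ cell i j) : antipode i j (antipode i j p) = p := by
  simp only [mem_cell, antipode, Prod.ext_iff] at *
  omega

theorem LatticeAdj.eq_or_eq_antipode (h : LatticeAdj p q) (hp : p ∈ cell i j) (hq : q ∈ cell i j)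
    (hs : s ∈ cell i j) : s = p ∨ s = q ∨ s = antipode i j p ∨ s = antipode i j q := by
  simp only [mem_cell, LatticeAdj, antipode, Prod.ext_iff] at *
  omega

theorem GridArc.to_antipode (h : GridArc r c p q) (hij : CyclicCell r c i j) (hp : p ∈ cell i j)
    (hq : q ∈ cell i j) : GridArc r c q (antipode i j p) := by
  obtain ⟨x, y⟩ := p
  simp only [mem_cell] at hp hq
  obtain hx | hx : x = i ∨ x = i + 1 := by omega
  all_goals
    obtain hy | hy : y = j ∨ y = j + 1 := by omega
    all_goals
      subst hx hy
      unfold GridArc LatticeAdj EmitsHorizontally CyclicCell antipode at *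
      omega

/-- The vertices of the grid `P_n □ P_m` as lattice points. -/
def coords {n m : ℕ} (x : Fin n × Fin m) : ℕ × ℕ :=
  (x.1, x.2)

theorem coords_injective {n m : ℕ} : Function.Injective (coords (n := n) (m := m)) := fun _ _ h =>
  Prod.ext (Fin.ext (congrArg Prod.fst h)) (Fin.ext (congrArg Prod.snd h))

theorem coords_lt {n m : ℕ} (x : Fin n × Fin m) : (coords x).1 < n ∧ (coords x).2 < m :=
  ⟨x.1.isLt, x.2.isLt⟩

theorem exists_coords_eq {n m : ℕ} {p : ℕ × ℕ} (hp : p.1 < n ∧ p.2 < m) :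
    ∃ x : Fin n × Fin m, coords x = p :=
  ⟨(⟨p.1, hp.1⟩, ⟨p.2, hp.2⟩), rfl⟩

theorem gridGraph_adj_iff {n m : ℕ} {x y : Fin n × Fin m} :
    (gridGraph n m).Adj x y ↔ LatticeAdj (coords x) (coords y) := by
  simp only [gridGraph, SimpleGraph.boxProd_adj, SimpleGraph.pathGraph_adj, LatticeAdj, coords,
    Fin.ext_iff]
  omega

/-- The orientation of the grid `P_n □ P_m` for which `Set.Iic (r, c)` is a largest proper convex
set. -/
def gridOrientation (n m r c : ℕ) (x y : Fin n × Fin m) : Prop :=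
  GridArc r c (coords x) (coords y)

theorem isOrientation_gridOrientation (n m r c : ℕ) :
    IsOrientation (gridGraph n m) (gridOrientation n m r c) :=
  ⟨fun _ _ h => gridGraph_adj_iff.2 h.1,
    fun _ _ h => (gridGraph_adj_iff.1 h).gridArc_or_gridArc, fun _ _ h => h.asymm⟩

/-- The checkerboard colouring of the grid. -/
def checkerboard {n m : ℕ} (x : Fin n × Fin m) : Bool :=
  decide (Even ((coords x).1 + (coords x).2))

theorem checkerboard_ne {n m : ℕ} (x y : Fin n × Fin m) (h : gridOrientation n m r c x y) :
    checkerboard x ≠ checkerboard y := by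
  have hadj := h.1
  simp only [checkerboard, ne_eq, decide_eq_decide, Nat.even_iff]
  unfold LatticeAdj at hadj
  omega

end Orientation

section Rectangle

variable {n m r c k l : ℕ} {p q v : ℕ × ℕ}

/-- The number of horizontal steps among the last `l` steps of a walk that ends at `v` and stays
in the rectangle `Set.Iic (r, c)`, where horizontal and vertical steps alternate. -/
def horizontalSteps (r c : ℕ) (v : ℕ × ℕ) (l : ℕ) : ℕ :=
  (l + (v.1 + v.2 + r + c) % 2) / 2

/-- The number of vertical steps among the last `l` steps of a walk that ends at `v` and stays
in the rectangle `Set.Iic (r, c)`. -/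
def verticalSteps (r c : ℕ) (v : ℕ × ℕ) (l : ℕ) : ℕ :=
  (l + (v.1 + v.2 + r + c + 1) % 2) / 2

/-- The projection of `p` to the rectangle `Set.Iic (r, c)` can be moved to `v` in `l` steps, some
of them possibly idle, that are alternately horizontal and vertical, the first of them being of
the kind that leaves `p`. -/
def Steerable (r c : ℕ) (v : ℕ × ℕ) (l : ℕ) (p : ℕ × ℕ) : Prop :=
  (EmitsHorizontally r c p ↔ (v.1 + v.2 + r + c + l) % 2 = 0) ∧
    min p.1 r ∈ Set.Icc (v.1 - verticalSteps r c v l) (v.1 + verticalSteps r c v l) ∧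
    min p.2 c ∈ Set.Icc (v.2 - horizontalSteps r c v l) (v.2 + horizontalSteps r c v l)

theorem steerable_self (hv : v ∈ Set.Iic (r, c)) : Steerable r c v 0 v := by
  simp only [Set.mem_Iic, Prod.le_def] at hv
  simp only [Steerable, EmitsHorizontally, horizontalSteps, verticalSteps, Set.mem_Icc]
  omega

theorem Steerable.eq_of_zero (h : Steerable r c v 0 p) (hp : p ∈ Set.Iic (r, c)) : p = v := by
  simp only [Set.mem_Iic, Prod.le_def] at hp
  simp only [Steerable, EmitsHorizontally, horizontalSteps, verticalSteps, Set.mem_Icc] at h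
  rw [Prod.ext_iff]
  omega

theorem Steerable.even_add (h : Steerable r c v l p) (hp : p ∈ Set.Iic (r, c)) :
    Even (p.1 + p.2 + (v.1 + v.2) + l) := by
  have hE := h.1
  rw [EmitsHorizontally, iff_true_right (show p.1 ≤ r ∧ p.2 ≤ c from hp)] at hE
  rw [Nat.even_iff]
  omega

theorem horizontalSteps_succ (r c : ℕ) (v : ℕ × ℕ) (l : ℕ) :
    horizontalSteps r c v (l + 1) = horizontalSteps r c v l + (v.1 + v.2 + r + c + l) % 2 := by
  unfold horizontalSteps
  omega

theorem verticalSteps_succ (r c : ℕ) (v : ℕ × ℕ) (l : ℕ) :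
    verticalSteps r c v (l + 1) = verticalSteps r c v l + (v.1 + v.2 + r + c + l + 1) % 2 := by
  unfold verticalSteps
  omega

theorem Steerable.succ (h : Steerable r c v l q) (hpq : GridArc r c p q)
    (hside : p ∈ Set.Iic (r, c) ↔ q ∈ Set.Iic (r, c)) : Steerable r c v (l + 1) p := by
  obtain ⟨hq, hrow, hcol⟩ := h
  have hp := (hpq.emitsHorizontally_iff_not hside).trans hq.not
  have hdir := hpq.emitsHorizontally_of_same_side hside
  have hadj := hpq.1
  rw [hp] at hdir
  rw [Steerable, hp, horizontalSteps_succ, verticalSteps_succ]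
  clear hpq hside hp hq
  simp only [LatticeAdj, Set.mem_Icc] at *
  omega

theorem Steerable.of_cross (h : Steerable r c v l q) (hpq : GridArc r c p q)
    (hside : ¬ (p ∈ Set.Iic (r, c) ↔ q ∈ Set.Iic (r, c))) : Steerable r c v l p := by
  have hadj := hpq.1
  simp only [Set.mem_Iic, Prod.le_def] at hside
  have hE : EmitsHorizontally r c p ↔ EmitsHorizontally r c q := by
    unfold LatticeAdj EmitsHorizontally at *
    omega
  have hrow : min p.1 r = min q.1 r := by
    unfold LatticeAdj at hadj
    omega
  have hcol : min p.2 c = min q.2 c := by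
    unfold LatticeAdj at hadj
    omega
  rwa [Steerable, hE, hrow, hcol]

theorem IsDirWalk.exists_steerable {f : ℕ → ℕ × ℕ} (hf : IsDirWalk (GridArc r c) k f p v)
    (hv : v ∈ Set.Iic (r, c)) :
    ∃ l ≤ k, Steerable r c v l p ∧ (p ∉ Set.Iic (r, c) → l < k) ∧
      (p ∈ Set.Iic (r, c) → (∃ i ≤ k, f i ∉ Set.Iic (r, c)) → l + 2 ≤ k) := by
  induction k generalizing f p with
  | zero =>
    obtain rfl := hf.eq_of_zero
    refine ⟨0, le_rfl, steerable_self hv, fun h => absurd hv h, fun _ ⟨i, hi, hfi⟩ => ?_⟩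
    rw [Nat.le_zero.1 hi, hf.1] at hfi
    exact absurd hv hfi
  | succ k ih =>
    obtain ⟨l, hlk, hl, hout, hexc⟩ := ih hf.tail
    by_cases hside : p ∈ Set.Iic (r, c) ↔ f 1 ∈ Set.Iic (r, c)
    · refine ⟨l + 1, by omega, hl.succ hf.head hside,
        fun hp => Nat.succ_lt_succ (hout (mt hside.2 hp)), fun hp ⟨i, hi, hfi⟩ => ?_⟩
      obtain _ | i := i
      · exact absurd (hf.1 ▸ hp) hfi
      · exact Nat.succ_le_succ (hexc (hside.1 hp) ⟨i, Nat.le_of_succ_le_succ hi, hfi⟩)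
    · refine ⟨l, by omega, hl.of_cross hf.head hside, fun _ => by omega, fun hp _ => ?_⟩
      exact Nat.succ_le_succ (hout fun h => hside ⟨fun _ => h, fun _ => hp⟩)

theorem exists_step_toward {x t d : ℕ} (hc : 1 ≤ c) (hx : x ≤ c) (ht : t ≤ c)
    (hxt : x ∈ Set.Icc (t - (d + 1)) (t + (d + 1))) (hd : x = t → d ≠ 0) :
    ∃ y ≤ c, (x = y + 1 ∨ y = x + 1) ∧ y ∈ Set.Icc (t - d) (t + d) := by
  simp only [Set.mem_Icc] at *
  by_cases hlt : x < t ∨ x = 0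
  · exact ⟨x + 1, by omega, by omega, by omega⟩
  · exact ⟨x - 1, by omega, by omega, by omega⟩

theorem Steerable.exists_horizontal_gridArc (h : Steerable r c v (l + 1) p) (hc : 1 ≤ c)
    (hp : p ∈ Set.Iic (r, c)) (hv : v ∈ Set.Iic (r, c)) (hne : p ≠ v)
    (hH : EmitsHorizontally r c p) :
    ∃ q ∈ Set.Iic (r, c), GridArc r c p q ∧ Steerable r c v l q := by
  have heven := Nat.even_iff.1 (h.even_add hp)
  obtain ⟨hE, hrow, hcol⟩ := h
  have hpar : (v.1 + v.2 + r + c + l) % 2 = 1 := by have := hE.1 hH; omega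
  rw [min_eq_left hp.1, verticalSteps_succ, Nat.succ_mod_two_eq_zero_iff.2 hpar] at hrow
  rw [min_eq_left hp.2, horizontalSteps_succ, hpar] at hcol
  have hd : p.2 = v.2 → horizontalSteps r c v l ≠ 0 := fun hpv hd => by
    have hne' : p.1 ≠ v.1 := fun h => hne (Prod.ext h hpv)
    simp only [horizontalSteps, verticalSteps, Set.mem_Icc] at hd hrow hcol
    omega
  obtain ⟨y, hyc, hpy, hy⟩ := exists_step_toward hc hp.2 hv.2 hcol hd
  have hq : (p.1, y) ∈ Set.Iic (r, c) := ⟨hp.1, hyc⟩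
  have hadj : LatticeAdj p (p.1, y) := .inl ⟨rfl, hpy⟩
  have harc := (hadj.gridArc_iff_of_mem hp hq).2 (iff_of_true hH rfl)
  have hqE := (harc.emitsHorizontally_iff_not (iff_of_true hp hq)).1 hH
  exact ⟨_, hq, harc, iff_of_false hqE (by omega), (min_eq_left hp.1).symm ▸ hrow,
    (min_eq_left hyc).symm ▸ hy⟩

theorem Steerable.exists_vertical_gridArc (h : Steerable r c v (l + 1) p) (hr : 1 ≤ r)
    (hp : p ∈ Set.Iic (r, c)) (hv : v ∈ Set.Iic (r, c)) (hne : p ≠ v)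
    (hH : ¬ EmitsHorizontally r c p) :
    ∃ q ∈ Set.Iic (r, c), GridArc r c p q ∧ Steerable r c v l q := by
  have heven := Nat.even_iff.1 (h.even_add hp)
  obtain ⟨hE, hrow, hcol⟩ := h
  have hpar : (v.1 + v.2 + r + c + l) % 2 = 0 := by have := mt hE.2 hH; omega
  rw [min_eq_left hp.1, verticalSteps_succ, Nat.succ_mod_two_eq_one_iff.2 hpar] at hrow
  rw [min_eq_left hp.2, horizontalSteps_succ, hpar] at hcol
  have hd : p.1 = v.1 → verticalSteps r c v l ≠ 0 := fun hpv hd => by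
    have hne' : p.2 ≠ v.2 := fun h => hne (Prod.ext hpv h)
    simp only [horizontalSteps, verticalSteps, Set.mem_Icc] at hd hrow hcol
    omega
  obtain ⟨x, hxr, hpx, hx⟩ := exists_step_toward hr hp.1 hv.1 hrow hd
  have hq : (x, p.2) ∈ Set.Iic (r, c) := ⟨hxr, hp.2⟩
  have hadj : LatticeAdj p (x, p.2) := .inr ⟨rfl, hpx⟩
  have harc := (hadj.gridArc_iff_of_mem hp hq).2 (iff_of_false hH (by lia))
  have hqE := not_not.1 (mt (harc.emitsHorizontally_iff_not (iff_of_true hp hq)).2 hH)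
  exact ⟨_, hq, harc, iff_of_true hqE hpar, (min_eq_left hxr).symm ▸ hx,
    (min_eq_left hp.2).symm ▸ hcol⟩

theorem Steerable.exists_isDirWalk {u v : Fin n × Fin m} (h : Steerable r c (coords v) l (coords u))
    (hrn : r < n) (hcm : c < m) (hr : 1 ≤ r) (hc : 1 ≤ c)
    (hu : coords u ∈ Set.Iic (r, c)) (hv : coords v ∈ Set.Iic (r, c)) :
    ∃ k ≤ l, ∃ f, IsDirWalk (gridOrientation n m r c) k f u v := by
  induction l generalizing u with
  | zero =>
    obtain rfl := coords_injective (h.eq_of_zero hu)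
    exact ⟨0, le_rfl, _, .nil _ u⟩
  | succ l ih =>
    obtain rfl | huv := eq_or_ne u v
    · exact ⟨0, Nat.zero_le _, _, .nil _ u⟩
    obtain ⟨q, hq, harc, hl⟩ :
        ∃ q ∈ Set.Iic (r, c), GridArc r c (coords u) q ∧ Steerable r c (coords v) l q := by
      by_cases hH : EmitsHorizontally r c (coords u)
      · exact h.exists_horizontal_gridArc hc hu hv (coords_injective.ne huv) hH
      · exact h.exists_vertical_gridArc hr hu hv (coords_injective.ne huv) hH
    obtain ⟨w, rfl⟩ := exists_coords_eq ⟨hq.1.trans_lt hrn, hq.2.trans_lt hcm⟩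
    obtain ⟨k, hk, f, hf⟩ := ih hl hq
    exact ⟨k + 1, Nat.succ_le_succ hk, _, hf.cons harc⟩

theorem dConvex_preimage_Iic (hrn : r < n) (hcm : c < m) (hr : 1 ≤ r) (hc : 1 ≤ c) :
    DConvex (gridOrientation n m r c) (coords ⁻¹' Set.Iic (r, c)) := by
  refine ⟨⟨(⟨r, hrn⟩, ⟨c, hcm⟩), le_refl (r, c)⟩, fun u hu v hv k f hf i hi => ?_⟩
  by_contra hfi
  have hwalk : IsDirWalk (GridArc r c) k (fun i => coords (f i)) (coords u) (coords v) :=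
    ⟨congrArg coords hf.1.1, congrArg coords hf.1.2.1, hf.1.2.2⟩
  obtain ⟨l, -, hl, -, hlk⟩ := hwalk.exists_steerable hv
  obtain ⟨k', hk', f', hf'⟩ := hl.exists_isDirWalk hrn hcm hr hc hu hv
  have := hf.2 k' f' hf'
  have := hlk hu ⟨i, hi, hfi⟩
  omega

end Rectangle

section Filling

variable {n m r c i j k : ℕ} {p q : ℕ × ℕ} {K : Set (ℕ × ℕ)}

/-- The closure properties of a set of vertices of the grid `P_n □ P_m` that a `SquareClosed` set
of the orientation has. They do not mention directions, so they survive exchanging rows and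
columns. -/
structure GridClosed (n m r c : ℕ) (K : Set (ℕ × ℕ)) : Prop where
  lt_and_lt {p : ℕ × ℕ} : p ∈ K → p.1 < n ∧ p.2 < m
  mem_of_neighbours {p q s : ℕ × ℕ} : p.1 < n → p.2 < m → r < p.1 ∨ c < p.2 → LatticeAdj p q →
    LatticeAdj p s → p.1 = q.1 → p.2 = s.2 → q ∈ K → s ∈ K → p ∈ K
  cell_subset {i j : ℕ} {p q : ℕ × ℕ} : CyclicCell r c i j → i + 1 < n → j + 1 < m →
    LatticeAdj p q → p ∈ cell i j → q ∈ cell i j → p ∈ K → q ∈ K → cell i j ⊆ K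

theorem cell_subset_preimage_swap_iff : cell j i ⊆ Prod.swap ⁻¹' K ↔ cell i j ⊆ K :=
  ⟨fun h p hp => @h p.swap ⟨hp.1.symm, hp.2.symm⟩, fun h p hp => @h p.swap ⟨hp.1.symm, hp.2.symm⟩⟩

theorem Iic_subset_preimage_swap_iff :
    Set.Iic (c, r) ⊆ Prod.swap ⁻¹' K ↔ Set.Iic (r, c) ⊆ K :=
  ⟨fun h p hp => @h p.swap hp.symm, fun h p hp => @h p.swap hp.symm⟩

theorem CyclicCell.swap (h : CyclicCell r c i j) : CyclicCell c r j i := by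
  unfold CyclicCell at *
  omega

theorem LatticeAdj.swap (h : LatticeAdj p q) : LatticeAdj p.swap q.swap :=
  Or.symm h

namespace GridClosed

theorem swap (h : GridClosed n m r c K) : GridClosed m n c r (Prod.swap ⁻¹' K) where
  lt_and_lt hp := (h.lt_and_lt hp).symm
  mem_of_neighbours hpn hpm hout hpq hps hrow hcol hq hs :=
    h.mem_of_neighbours hpm hpn hout.symm hps.swap hpq.swap hcol hrow hs hq
  cell_subset hcyc hi hj hadj hp hq hpK hqK := cell_subset_preimage_swap_iff.2 <|
    h.cell_subset hcyc.swap hj hi hadj.swap ⟨hp.1.symm, hp.2.symm⟩ ⟨hq.1.symm, hq.2.symm⟩ hpK hqK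

theorem cell_succ_subset_iff (h : GridClosed n m r c K) (hj : CyclicCell r c i j)
    (hj' : CyclicCell r c i (j + 1)) (hi : i + 1 < n) (hjm : j + 2 < m) :
    cell i j ⊆ K ↔ cell i (j + 1) ⊆ K := by
  have hadj : LatticeAdj (i, j + 1) (i + 1, j + 1) := .inr ⟨rfl, .inr rfl⟩
  have hp : (i, j + 1) ∈ cell i j := by simp [mem_cell]
  have hq : (i + 1, j + 1) ∈ cell i j := by simp [mem_cell]
  have hp' : (i, j + 1) ∈ cell i (j + 1) := by simp [mem_cell]
  have hq' : (i + 1, j + 1) ∈ cell i (j + 1) := by simp [mem_cell]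
  exact ⟨fun hK => h.cell_subset hj' hi hjm hadj hp' hq' (hK hp) (hK hq),
    fun hK => h.cell_subset hj hi (by omega) hadj hp hq (hK hp') (hK hq')⟩

theorem cell_subset_iff_of_row (h : GridClosed n m r c K)
    (hcyc : ∀ l ∈ Set.uIcc j k, CyclicCell r c i l) (hi : i + 1 < n) (hj : j + 1 < m)
    (hk : k + 1 < m) : cell i j ⊆ K ↔ cell i k ⊆ K := by
  wlog hjk : j ≤ k generalizing j k
  · exact (this (Set.uIcc_comm j k ▸ hcyc) hk hj (le_of_not_ge hjk)).symm
  rw [Set.uIcc_of_le hjk] at hcyc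
  induction k, hjk using Nat.le_induction with
  | base => rfl
  | succ k hjk ih =>
    refine (ih (fun l hl => hcyc l ⟨hl.1, hl.2.trans k.le_succ⟩) (by omega)).trans ?_
    exact h.cell_succ_subset_iff (hcyc k ⟨hjk, k.le_succ⟩)
      (hcyc (k + 1) ⟨hjk.trans k.le_succ, le_rfl⟩) hi hk

theorem cell_subset_iff_of_column (h : GridClosed n m r c K)
    (hcyc : ∀ l ∈ Set.uIcc i k, CyclicCell r c l j) (hj : j + 1 < m) (hi : i + 1 < n)
    (hk : k + 1 < n) : cell i j ⊆ K ↔ cell k j ⊆ K := by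
  have := h.swap.cell_subset_iff_of_row (fun l hl => (hcyc l hl).swap) hj hi hk
  rwa [cell_subset_preimage_swap_iff, cell_subset_preimage_swap_iff] at this

theorem cell_subset_iff_corner (h : GridClosed n m r c K) (hrn : r + 1 < n) (hcm : c + 1 < m)
    (hi : i + 1 < n) (hj : j + 1 < m) (hij : r < i ∨ c < j ∨ i = r ∧ j = c) :
    cell i j ⊆ K ↔ cell r c ⊆ K := by
  by_cases hri : r ≤ i
  · refine (h.cell_subset_iff_of_row (fun l hl => ?_) hi hj hcm).trans
      (h.cell_subset_iff_of_column (fun l hl => ?_) hcm hi hrn)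
    all_goals
      rw [Set.mem_uIcc] at hl
      unfold CyclicCell
      omega
  · refine (h.cell_subset_iff_of_column (fun l hl => ?_) hj hi hrn).trans
      (h.cell_subset_iff_of_row (fun l hl => ?_) hrn hj hcm)
    all_goals
      rw [Set.mem_uIcc] at hl
      unfold CyclicCell
      omega

theorem Iic_subset_of_inner_cell (h : GridClosed n m r c K) (hrn : r < n) (hcm : c < m)
    (hi : i < r) (hj : j < c) (hK : cell i j ⊆ K) : Set.Iic (r, c) ⊆ K := by
  intro p hp
  have hp' : p.1 ≤ r ∧ p.2 ≤ c := hp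
  have hcell : cell (min p.1 (r - 1)) (min p.2 (c - 1)) ⊆ K := by
    refine (h.cell_subset_iff_of_column (i := i) (fun l hl => ?_) ?_ ?_ ?_).1
      ((h.cell_subset_iff_of_row (fun l hl => ?_) ?_ ?_ ?_).1 hK)
    all_goals
      try rw [Set.mem_uIcc] at hl
      try unfold CyclicCell
      omega
  exact hcell (by rw [mem_cell]; omega)

theorem Iic_subset_of_latticeAdj (h : GridClosed n m r c K) (hrn : r < n) (hcm : c < m)
    (hr : 1 ≤ r) (hc : 1 ≤ c) (hpq : LatticeAdj p q) (hp : p ∈ Set.Iic (r, c))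
    (hq : q ∈ Set.Iic (r, c)) (hpK : p ∈ K) (hqK : q ∈ K) : Set.Iic (r, c) ⊆ K := by
  simp only [Set.mem_Iic, Prod.le_def] at hp hq
  have hi : min (min p.1 q.1) (r - 1) < r := by omega
  have hj : min (min p.2 q.2) (c - 1) < c := by omega
  refine h.Iic_subset_of_inner_cell hrn hcm hi hj
    (h.cell_subset (.inl ⟨hi, hj⟩) ?_ ?_ hpq ?_ ?_ hpK hqK)
  all_goals
    simp only [mem_cell, LatticeAdj] at *
    omega

theorem mem_of_corner_le (h : GridClosed n m r c K) (hrn : r + 1 < n) (hcm : c + 1 < m)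
    (hK : cell r c ⊆ K) (hp : (r, c) ≤ p) (hpn : p.1 < n) (hpm : p.2 < m) : p ∈ K := by
  simp only [Prod.le_def] at hp
  refine (h.cell_subset_iff_corner (i := min p.1 (n - 2)) (j := min p.2 (m - 2)) hrn hcm
    ?_ ?_ ?_).2 hK ?_
  all_goals
    try rw [mem_cell]
    omega

theorem mem_of_fst_le (h : GridClosed n m r c K) (hrn : r + 1 < n) (hcm : c + 1 < m)
    (hK : cell r c ⊆ K) (hR : Set.Iic (r, c) ⊆ K) {x y : ℕ} (hx : x ≤ r) (hy : y < m) :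
    (x, y) ∈ K := by
  induction hx using Nat.decreasingInduction generalizing y with
  | self =>
    obtain hyc | hcy := le_total y c
    · exact hR ⟨le_rfl, hyc⟩
    · exact h.mem_of_corner_le hrn hcm hK ⟨le_rfl, hcy⟩ (by omega) hy
  | of_succ x hx ih =>
    induction y with
    | zero => exact hR ⟨hx.le, Nat.zero_le c⟩
    | succ y ihy =>
      by_cases hyc : y + 1 ≤ c
      · exact hR ⟨hx.le, hyc⟩
      · have hadj : LatticeAdj (x, y + 1) (x, y) := .inl ⟨rfl, .inl rfl⟩
        have hadj' : LatticeAdj (x, y + 1) (x + 1, y + 1) := .inr ⟨rfl, .inr rfl⟩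
        exact h.mem_of_neighbours (by omega) hy (.inr (by omega)) hadj hadj' rfl rfl
          (ihy (by omega)) (ih hy)

theorem mem_of_lt (h : GridClosed n m r c K) (hrn : r + 1 < n) (hcm : c + 1 < m)
    (hK : cell r c ⊆ K) (hR : Set.Iic (r, c) ⊆ K) (hpn : p.1 < n) (hpm : p.2 < m) : p ∈ K := by
  by_cases hpr : p.1 ≤ r
  · exact h.mem_of_fst_le hrn hcm hK hR hpr hpm
  by_cases hpc : p.2 ≤ c
  · exact h.swap.mem_of_fst_le hcm hrn (cell_subset_preimage_swap_iff.2 hK)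
      (Iic_subset_preimage_swap_iff.2 hR) hpc hpn
  · exact h.mem_of_corner_le hrn hcm hK (Prod.mk_le_mk.2 ⟨by omega, by omega⟩) hpn hpm

end GridClosed

/-- The closure properties, in addition to `GridClosed`, of the nontrivial convex sets of the
orientation. The last two are due to geodesics of length four around `(r, c)`. -/
structure GridConvex (n m r c : ℕ) (K : Set (ℕ × ℕ)) : Prop extends GridClosed n m r c K where
  exists_adj {p : ℕ × ℕ} : p ∈ K → ∃ q ∈ K, LatticeAdj p q
  exists_adj_column {p : ℕ × ℕ} : r < p.1 ∨ c < p.2 → p ∈ K → ∃ q ∈ K, LatticeAdj p q ∧ p.2 = q.2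
  exists_adj_row {p : ℕ × ℕ} : r < p.1 ∨ c < p.2 → p ∈ K → ∃ q ∈ K, LatticeAdj p q ∧ p.1 = q.1
  mem_column_of_corner {i : ℕ} : i + 1 = r → (r, c) ∈ K → (i, c + 1) ∈ K → (i, c) ∈ K
  mem_row_of_corner {j : ℕ} : j + 1 = c → (r, c) ∈ K → (r + 1, j) ∈ K → (r, j) ∈ K

namespace GridConvex

theorem swap (h : GridConvex n m r c K) : GridConvex m n c r (Prod.swap ⁻¹' K) where
  toGridClosed := h.toGridClosed.swap
  exists_adj hp :=
    let ⟨q, hq, hpq⟩ := h.exists_adj hp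
    ⟨q.swap, hq, hpq.swap⟩
  exists_adj_column hout hp :=
    let ⟨q, hq, hpq, hrow⟩ := h.exists_adj_row hout.symm hp
    ⟨q.swap, hq, hpq.swap, hrow⟩
  exists_adj_row hout hp :=
    let ⟨q, hq, hpq, hcol⟩ := h.exists_adj_column hout.symm hp
    ⟨q.swap, hq, hpq.swap, hcol⟩
  mem_column_of_corner := h.mem_row_of_corner
  mem_row_of_corner := h.mem_column_of_corner

theorem Iic_subset_of_lt (h : GridConvex n m r c K) (hrn : r + 1 < n) (hcm : c + 2 < m)
    (hr : 1 ≤ r) (hc : 1 ≤ c) (hK : cell r c ⊆ K) : Set.Iic (r, c) ⊆ K := by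
  obtain ⟨i, rfl⟩ := Nat.exists_eq_add_of_le' hr
  have hcell : cell i (c + 1) ⊆ K :=
    (h.cell_subset_iff_corner hrn (by omega) (by omega) hcm (by omega)).2 hK
  have hcorner : (i + 1, c) ∈ K := hK (by simp [mem_cell])
  have hmem : (i, c) ∈ K := h.mem_column_of_corner rfl hcorner (hcell (by simp [mem_cell]))
  have hadj : LatticeAdj (i, c) (i + 1, c) := .inr ⟨rfl, .inr rfl⟩
  exact h.Iic_subset_of_latticeAdj (by omega) (by omega) hr hc hadj
    ⟨Nat.le_succ i, le_rfl⟩ (le_refl (i + 1, c)) hmem hcorner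

theorem Iic_subset_of_last_row (h : GridConvex n m r c K) (hn : n = r + 2) (hcm : c < m)
    (hr : 1 ≤ r) (hc : 1 ≤ c) {y : ℕ} (hy : y < c) (hK : (r + 1, y) ∈ K) :
    Set.Iic (r, c) ⊆ K := by
  have mem_above {z : ℕ} (hz : (r + 1, z) ∈ K) : (r, z) ∈ K := by
    obtain ⟨⟨x, _⟩, hx, hadj, rfl⟩ := h.exists_adj_column (.inl r.lt_succ_self) hz
    have := (h.lt_and_lt hx).1
    obtain rfl : x = r := by unfold LatticeAdj at hadj; omega
    exact hx
  obtain ⟨⟨_, z⟩, hz, hadj, rfl⟩ := h.exists_adj_row (.inl r.lt_succ_self) hK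
  have hyz : y = z + 1 ∨ z = y + 1 := by unfold LatticeAdj at hadj; omega
  have hadj' : LatticeAdj (r, y) (r, z) := .inl ⟨rfl, hyz⟩
  exact h.Iic_subset_of_latticeAdj (by omega) hcm hr hc hadj' ⟨le_rfl, hy.le⟩
    (Prod.mk_le_mk.2 ⟨le_rfl, by omega⟩) (mem_above hK) (mem_above hz)

theorem corner_subset_of_last_row (h : GridConvex n m r c K) (hn : n = r + 2) (hcm : c + 1 < m)
    (hr : 1 ≤ r) (hc : 1 ≤ c) {y : ℕ} (hy : y < c) (hK : (r + 1, y) ∈ K) : cell r c ⊆ K := by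
  have hR := h.Iic_subset_of_last_row hn (by omega) hr hc hy hK
  have hrow : ∀ z, y ≤ z → z ≤ c → (r + 1, z) ∈ K := fun z hyz => by
    induction z, hyz using Nat.le_induction with
    | base => exact fun _ => hK
    | succ z _ ih =>
      intro hz
      have hadj : LatticeAdj (r + 1, z + 1) (r + 1, z) := .inl ⟨rfl, .inl rfl⟩
      have hadj' : LatticeAdj (r + 1, z + 1) (r, z + 1) := .inr ⟨rfl, .inl rfl⟩
      exact h.mem_of_neighbours (by omega) (by omega) (.inl r.lt_succ_self) hadj hadj' rfl rfl
        (ih (by omega)) (hR ⟨le_rfl, hz⟩)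
  have hadj : LatticeAdj (r, c) (r + 1, c) := .inr ⟨rfl, .inr rfl⟩
  exact h.cell_subset (.inr (.inr (.inr ⟨rfl, rfl⟩))) (by omega) hcm hadj
    (by simp [mem_cell]) (by simp [mem_cell]) (hR (le_refl (r, c))) (hrow c hy.le le_rfl)

theorem corner_subset_of_lt_fst (h : GridConvex n m r c K) (hrn : r + 1 < n) (hcm : c + 1 < m)
    (hr : 1 ≤ r) (hc : 1 ≤ c) {x y : ℕ} (hx : r < x) (hK : (x, y) ∈ K) : cell r c ⊆ K := by
  obtain ⟨⟨_, z⟩, hz, hadj, rfl⟩ := h.exists_adj_row (.inl hx) hK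
  have hyz : y = z + 1 ∨ z = y + 1 := by unfold LatticeAdj at hadj; omega
  have hxn := h.lt_and_lt hK
  have hzm := h.lt_and_lt hz
  have of_cell {i : ℕ} (hi : i + 1 < n) (hout : r < i ∨ c < min y z ∨ i = r ∧ min y z = c)
      (hix : i = x ∨ i + 1 = x) : cell r c ⊆ K := by
    refine (h.cell_subset_iff_corner (j := min y z) hrn hcm hi (by omega) hout).1
      (h.cell_subset (.inr hout) hi (by omega) hadj ?_ ?_ hK hz)
    all_goals
      rw [mem_cell]
      omega
  by_cases habove : r < x - 1 ∨ c ≤ min y z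
  · exact of_cell (i := x - 1) (by omega) (by omega) (by omega)
  by_cases hbelow : x + 1 < n
  · exact of_cell hbelow (.inl hx) (.inl rfl)
  obtain rfl : x = r + 1 := by omega
  obtain hlt | hlt : y < c ∨ z < c := by omega
  · exact h.corner_subset_of_last_row (by omega) hcm hr hc hlt hK
  · exact h.corner_subset_of_last_row (by omega) hcm hr hc hlt hz

theorem corner_subset (h : GridConvex n m r c K) (hrn : r + 1 < n) (hcm : c + 1 < m)
    (hr : 1 ≤ r) (hc : 1 ≤ c) (hp : p ∉ Set.Iic (r, c)) (hK : p ∈ K) : cell r c ⊆ K := by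
  simp only [Set.mem_Iic, Prod.le_def] at hp
  obtain hpr | hpc : r < p.1 ∨ c < p.2 := by omega
  · exact h.corner_subset_of_lt_fst hrn hcm hr hc hpr hK
  · exact cell_subset_preimage_swap_iff.1 (h.swap.corner_subset_of_lt_fst hcm hrn hc hr hpc hK)

theorem Iic_subset_of_thin (h : GridConvex n m r c K) (hn : n = r + 2) (hm : m = c + 2)
    (hr : 1 ≤ r) (hc : 1 ≤ c) (hp : p ∉ cell r c) (hpK : p ∈ K) : Set.Iic (r, c) ⊆ K := by
  have of_outer {q : ℕ × ℕ} (hq : q ∉ cell r c) (hqR : q ∉ Set.Iic (r, c)) (hqK : q ∈ K) :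
      Set.Iic (r, c) ⊆ K := by
    have := h.lt_and_lt hqK
    obtain ⟨x, y⟩ := q
    simp only [mem_cell, Set.mem_Iic, Prod.le_def] at hq hqR this
    obtain ⟨rfl, hy⟩ | ⟨rfl, hx⟩ : x = r + 1 ∧ y < c ∨ y = c + 1 ∧ x < r := by omega
    · exact h.Iic_subset_of_last_row hn (by omega) hr hc hy hqK
    · exact Iic_subset_preimage_swap_iff.1
        (h.swap.Iic_subset_of_last_row hm (by omega) hc hr hx hqK)
  obtain ⟨q, hqK, hpq⟩ := h.exists_adj hpK
  by_cases hpR : p ∈ Set.Iic (r, c)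
  · by_cases hqR : q ∈ Set.Iic (r, c)
    · exact h.Iic_subset_of_latticeAdj (by omega) (by omega) hr hc hpq hpR hqR hpK hqK
    · refine of_outer (fun hq => ?_) hqR hqK
      simp only [mem_cell, Set.mem_Iic, Prod.le_def, LatticeAdj] at *
      omega
  · exact of_outer hp hpR hpK

theorem mem_of_lt (h : GridConvex n m r c K) (hrn : r + 1 < n) (hcm : c + 1 < m)
    (hr : 1 ≤ r) (hc : 1 ≤ c) (hR : ¬ K ⊆ Set.Iic (r, c)) (hcell : ¬ K ⊆ cell r c)
    (hpn : p.1 < n) (hpm : p.2 < m) : p ∈ K := by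
  obtain ⟨u, huK, hu⟩ := Set.not_subset.1 hR
  obtain ⟨v, hvK, hv⟩ := Set.not_subset.1 hcell
  have hK := h.corner_subset hrn hcm hr hc hu huK
  refine h.toGridClosed.mem_of_lt hrn hcm hK ?_ hpn hpm
  by_cases hcm' : c + 2 < m
  · exact h.Iic_subset_of_lt hrn hcm' hr hc hK
  by_cases hrn' : r + 2 < n
  · exact Iic_subset_preimage_swap_iff.1 (h.swap.Iic_subset_of_lt hcm hrn' hc hr
      (cell_subset_preimage_swap_iff.2 hK))
  · exact h.Iic_subset_of_thin (by omega) (by omega) hr hc hv hvK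

end GridConvex

end Filling

section ConvexSets

variable {n m r c : ℕ} {C : Set (Fin n × Fin m)}

theorem lt_and_lt_of_mem_image_coords {p : ℕ × ℕ} (h : p ∈ coords '' C) : p.1 < n ∧ p.2 < m := by
  obtain ⟨x, -, rfl⟩ := h
  exact coords_lt x

theorem mem_image_coords_of_squareClosed_of_neighbours
    (h : SquareClosed (gridOrientation n m r c) C) {p q s : ℕ × ℕ} (hpn : p.1 < n) (hpm : p.2 < m)
    (hout : r < p.1 ∨ c < p.2) (hpq : LatticeAdj p q) (hps : LatticeAdj p s) (hrow : p.1 = q.1)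
    (hcol : p.2 = s.2) (hq : q ∈ coords '' C) (hs : s ∈ coords '' C) : p ∈ coords '' C := by
  obtain ⟨x, rfl⟩ := exists_coords_eq ⟨hpn, hpm⟩
  obtain ⟨y, hy, rfl⟩ := hq
  obtain ⟨z, hz, rfl⟩ := hs
  have hrow' : (coords x).1 ≠ (coords z).1 := by unfold LatticeAdj at hps; omega
  have hcol' : (coords x).2 ≠ (coords y).2 := by unfold LatticeAdj at hpq; omega
  have hyz : y ≠ z := by rintro rfl; exact hrow' hrow
  refine Set.mem_image_of_mem coords ?_
  by_cases hE : EmitsHorizontally r c (coords x)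
  · exact h.mem_of_path ((hps.gridArc_to_iff_of_outer hout).2 (iff_of_true hE hcol))
      ((hpq.gridArc_iff_of_outer hout).2 (iff_of_true hE hrow)) hyz.symm hz hy
  · exact h.mem_of_path ((hpq.gridArc_to_iff_of_outer hout).2 (iff_of_false hE hcol'))
      ((hps.gridArc_iff_of_outer hout).2 (iff_of_false hE hrow')) hyz hy hz

theorem exists_directed_square {x y : Fin n × Fin m} {i j : ℕ} (hcyc : CyclicCell r c i j)
    (hi : i + 1 < n) (hj : j + 1 < m) (hxy : gridOrientation n m r c x y)
    (hx : coords x ∈ cell i j) (hy : coords y ∈ cell i j) :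
    ∃ z w, coords z = antipode i j (coords x) ∧ coords w = antipode i j (coords y) ∧
      gridOrientation n m r c y z ∧ gridOrientation n m r c z w ∧ gridOrientation n m r c w x := by
  have exists_vertex {s : ℕ × ℕ} (hs : s ∈ cell i j) : ∃ z : Fin n × Fin m, coords z = s :=
    exists_coords_eq (by rw [mem_cell] at hs; omega)
  have hz := antipode_mem_cell hx
  have hw := antipode_mem_cell hy
  have hyz := GridArc.to_antipode hxy hcyc hx hy
  have hzw := hyz.to_antipode hcyc hy hz
  have hwx := hzw.to_antipode hcyc hz hw
  rw [antipode_antipode hx] at hwx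
  obtain ⟨z, hz'⟩ := exists_vertex hz
  obtain ⟨w, hw'⟩ := exists_vertex hw
  rw [← hz'] at hyz hzw
  rw [← hw'] at hzw hwx
  exact ⟨z, w, hz', hw', hyz, hzw, hwx⟩

theorem cell_subset_image_coords_of_squareClosed (h : SquareClosed (gridOrientation n m r c) C)
    {i j : ℕ} {p q : ℕ × ℕ} (hcyc : CyclicCell r c i j) (hi : i + 1 < n) (hj : j + 1 < m)
    (hadj : LatticeAdj p q) (hp : p ∈ cell i j) (hq : q ∈ cell i j) (hpC : p ∈ coords '' C)
    (hqC : q ∈ coords '' C) : cell i j ⊆ coords '' C := by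
  wlog hpq : GridArc r c p q generalizing p q
  · exact this hadj.symm hq hp hqC hpC (hadj.gridArc_or_gridArc.resolve_left hpq)
  obtain ⟨x, hx, rfl⟩ := hpC
  obtain ⟨y, hy, rfl⟩ := hqC
  obtain ⟨z, w, hz, hw, hyz, hzw, hwx⟩ := exists_directed_square hcyc hi hj hpq hp hq
  obtain ⟨hzC, hwC⟩ := h.mem_of_square hpq hyz hzw hwx hx hy
  intro s hs
  obtain rfl | rfl | rfl | rfl := hadj.eq_or_eq_antipode hp hq hs
  exacts [⟨x, hx, rfl⟩, ⟨y, hy, rfl⟩, ⟨z, hzC, hz⟩, ⟨w, hwC, hw⟩]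

theorem SquareClosed.gridClosed (h : SquareClosed (gridOrientation n m r c) C) :
    GridClosed n m r c (coords '' C) where
  lt_and_lt := lt_and_lt_of_mem_image_coords
  mem_of_neighbours := mem_image_coords_of_squareClosed_of_neighbours h
  cell_subset := cell_subset_image_coords_of_squareClosed h

theorem eq_univ_of_lt_imp_mem_image_coords
    (h : ∀ p : ℕ × ℕ, p.1 < n → p.2 < m → p ∈ coords '' C) : C = Set.univ :=
  Set.eq_univ_of_forall fun x =>
    coords_injective.mem_set_image.1 (h _ (coords_lt x).1 (coords_lt x).2)

theorem cell_subset_image_coords_strongComponent {x : Fin n × Fin m} {i j : ℕ}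
    (hcyc : CyclicCell r c i j) (hi : i + 1 < n) (hj : j + 1 < m) (hx : coords x ∈ cell i j) :
    cell i j ⊆ coords '' strongComponent (gridOrientation n m r c) x := by
  obtain ⟨y, hy, hadj⟩ :
      ∃ y : Fin n × Fin m, coords y ∈ cell i j ∧ LatticeAdj (coords x) (coords y) := by
    rw [mem_cell] at hx
    obtain ⟨y, hy⟩ := exists_coords_eq (n := n) (m := m)
      (p := ((coords x).1, 2 * j + 1 - (coords x).2))
      ⟨x.1.isLt, show 2 * j + 1 - (coords x).2 < m by omega⟩
    refine ⟨y, ?_⟩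
    simp only [hy, mem_cell, LatticeAdj, true_and]
    omega
  have hyx : y ∈ strongComponent (gridOrientation n m r c) x := by
    obtain hxy | hyx : gridOrientation n m r c x y ∨ gridOrientation n m r c y x :=
      hadj.gridArc_or_gridArc
    · obtain ⟨z, w, -, -, hyz, hzw, hwx⟩ := exists_directed_square hcyc hi hj hxy hx hy
      exact mem_strongComponent_of_square hxy hyz hzw hwx
    · obtain ⟨z, w, -, -, hxz, hzw, hwy⟩ := exists_directed_square hcyc hi hj hyx hy hx
      exact And.symm (mem_strongComponent_of_square hyx hxz hzw hwy)
  exact cell_subset_image_coords_of_squareClosed (squareClosed_strongComponent _ x) hcyc hi hj hadj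
    hx hy ⟨x, ⟨.refl, .refl⟩, rfl⟩ ⟨y, hyx, rfl⟩

theorem strongConnected_gridOrientation (hrn : r + 1 < n) (hcm : c + 1 < m) (hr : 1 ≤ r)
    (hc : 1 ≤ c) : StrongConnected (gridOrientation n m r c) := by
  let u : Fin n × Fin m := (⟨r, by omega⟩, ⟨c, by omega⟩)
  have h := (squareClosed_strongComponent (gridOrientation n m r c) u).gridClosed
  have hcorner : cell r c ⊆ coords '' strongComponent (gridOrientation n m r c) u :=
    cell_subset_image_coords_strongComponent (.inr (.inr (.inr ⟨rfl, rfl⟩))) hrn hcm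
      (by simp [u, coords, mem_cell])
  have hinner : cell (r - 1) (c - 1) ⊆ coords '' strongComponent (gridOrientation n m r c) u :=
    cell_subset_image_coords_strongComponent (.inl ⟨by omega, by omega⟩) (by omega) (by omega)
      (by simp only [u, coords, mem_cell]; omega)
  have hR := h.Iic_subset_of_inner_cell (by omega) (by omega) (by omega) (by omega) hinner
  exact strongConnected_of_strongComponent_eq_univ
    (eq_univ_of_lt_imp_mem_image_coords fun _ => h.mem_of_lt hrn hcm hcorner hR)

theorem DConvex.exists_adj_column_and_row (hC : DConvex (gridOrientation n m r c) C)
    (hA : StrongConnected (gridOrientation n m r c)) (hnt : C.Nontrivial) {x : Fin n × Fin m}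
    (hx : x ∈ C) (hout : r < (coords x).1 ∨ c < (coords x).2) :
    (∃ y ∈ C, LatticeAdj (coords x) (coords y) ∧ (coords x).2 = (coords y).2) ∧
      ∃ y ∈ C, LatticeAdj (coords x) (coords y) ∧ (coords x).1 = (coords y).1 := by
  obtain ⟨y, hy, hxy⟩ := hC.exists_arc_from hA hnt hx
  obtain ⟨z, hz, hzx⟩ := hC.exists_arc_to hA hnt hx
  have hadj := hxy.1
  have hadj' := hzx.1.symm
  have hrow := (hadj.gridArc_iff_of_outer hout).1 hxy
  have hcol := (hadj'.gridArc_to_iff_of_outer hout).1 hzx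
  by_cases hE : EmitsHorizontally r c (coords x)
  · exact ⟨⟨z, hz, hadj', hcol.1 hE⟩, ⟨y, hy, hadj, hrow.1 hE⟩⟩
  · rw [iff_false_left hE] at hrow hcol
    exact ⟨⟨y, hy, hadj, (hadj.resolve_left fun h => hrow h.1).1⟩,
      ⟨z, hz, hadj', (hadj'.resolve_right fun h => hcol h.1).1⟩⟩

theorem DConvex.mem_image_coords_of_four_path (hC : DConvex (gridOrientation n m r c) C)
    {p₀ p₁ p₂ p₃ p₄ : ℕ × ℕ} (hp₁ : p₁.1 < n ∧ p₁.2 < m) (hp₂ : p₂.1 < n ∧ p₂.2 < m)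
    (hp₃ : p₃.1 < n ∧ p₃.2 < m)
    (h₀₁ : GridArc r c p₀ p₁) (h₁₂ : GridArc r c p₁ p₂) (h₂₃ : GridArc r c p₂ p₃)
    (h₃₄ : GridArc r c p₃ p₄) (hne : p₀ ≠ p₄) (hno : ∀ q, GridArc r c p₀ q → ¬ GridArc r c q p₄)
    (h₀ : p₀ ∈ coords '' C) (h₄ : p₄ ∈ coords '' C) : p₁ ∈ coords '' C ∧ p₃ ∈ coords '' C := by
  obtain ⟨x₀, hx₀, rfl⟩ := h₀
  obtain ⟨x₁, rfl⟩ := exists_coords_eq hp₁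
  obtain ⟨x₂, rfl⟩ := exists_coords_eq hp₂
  obtain ⟨x₃, rfl⟩ := exists_coords_eq hp₃
  obtain ⟨x₄, hx₄, rfl⟩ := h₄
  obtain ⟨hx₁, hx₃⟩ := hC.mem_of_four_path checkerboard_ne h₀₁ h₁₂ h₂₃ h₃₄
    (ne_of_apply_ne coords hne) (fun u => hno (coords u)) hx₀ hx₄
  exact ⟨⟨x₁, hx₁, rfl⟩, ⟨x₃, hx₃, rfl⟩⟩

theorem DConvex.mem_column_of_corner {i j : ℕ}
    (hC : DConvex (gridOrientation n m (i + 1) (j + 1)) C) (h : (i + 1, j + 1) ∈ coords '' C)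
    (h' : (i, j + 2) ∈ coords '' C) : (i, j + 1) ∈ coords '' C := by
  have hlt := lt_and_lt_of_mem_image_coords h
  have hlt' := lt_and_lt_of_mem_image_coords h'
  refine (hC.mem_image_coords_of_four_path (p₁ := (i + 1, j)) (p₂ := (i, j))
    ?_ ?_ ?_ ?_ ?_ ?_ ?_ ?_ (fun u => ?_) h h').2
  all_goals
    simp only [ne_eq, Prod.mk.injEq, GridArc, LatticeAdj, EmitsHorizontally, true_and, true_or,
      or_true]
    omega

theorem DConvex.mem_row_of_corner {i j : ℕ}
    (hC : DConvex (gridOrientation n m (i + 1) (j + 1)) C) (h : (i + 1, j + 1) ∈ coords '' C)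
    (h' : (i + 2, j) ∈ coords '' C) : (i + 1, j) ∈ coords '' C := by
  have hlt := lt_and_lt_of_mem_image_coords h
  have hlt' := lt_and_lt_of_mem_image_coords h'
  refine (hC.mem_image_coords_of_four_path (p₂ := (i, j)) (p₃ := (i, j + 1))
    ?_ ?_ ?_ ?_ ?_ ?_ ?_ ?_ (fun u => ?_) h' h).1
  all_goals
    simp only [ne_eq, Prod.mk.injEq, GridArc, LatticeAdj, EmitsHorizontally, true_and, true_or,
      or_true]
    omega

theorem DConvex.gridConvex (hC : DConvex (gridOrientation n m r c) C)
    (hA : StrongConnected (gridOrientation n m r c)) (hnt : C.Nontrivial) (hr : 1 ≤ r)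
    (hc : 1 ≤ c) : GridConvex n m r c (coords '' C) where
  toGridClosed :=
    (hC.squareClosed checkerboard_ne (isOrientation_gridOrientation n m r c).2.2).gridClosed
  exists_adj := by
    rintro _ ⟨x, hx, rfl⟩
    obtain ⟨y, hy, hxy⟩ := hC.exists_arc_from hA hnt hx
    exact ⟨coords y, ⟨y, hy, rfl⟩, hxy.1⟩
  exists_adj_column := by
    rintro _ hout ⟨x, hx, rfl⟩
    obtain ⟨y, hy, hxy⟩ := (hC.exists_adj_column_and_row hA hnt hx hout).1
    exact ⟨coords y, ⟨y, hy, rfl⟩, hxy⟩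
  exists_adj_row := by
    rintro _ hout ⟨x, hx, rfl⟩
    obtain ⟨y, hy, hxy⟩ := (hC.exists_adj_column_and_row hA hnt hx hout).2
    exact ⟨coords y, ⟨y, hy, rfl⟩, hxy⟩
  mem_column_of_corner := by
    obtain ⟨j, rfl⟩ := Nat.exists_eq_add_of_le' hc
    rintro i rfl
    exact hC.mem_column_of_corner
  mem_row_of_corner := by
    obtain ⟨i, rfl⟩ := Nat.exists_eq_add_of_le' hr
    rintro j rfl
    exact hC.mem_row_of_corner

theorem ncard_preimage_coords_Iic (hrn : r < n) (hcm : c < m) :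
    (coords (n := n) (m := m) ⁻¹' Set.Iic (r, c)).ncard = (r + 1) * (c + 1) := by
  rw [← Set.ncard_image_of_injective _ coords_injective, Set.image_preimage_eq_of_subset,
    ← Finset.coe_Iic, Set.ncard_coe_finset]
  · simp [← Finset.Iic_product_Iic]
  · exact fun p hp => exists_coords_eq ⟨hp.1.trans_lt hrn, hp.2.trans_lt hcm⟩

theorem ncard_cell (i j : ℕ) : (cell i j).ncard = 4 := by
  rw [cell, ← Finset.coe_Icc, Set.ncard_coe_finset, Finset.card_Icc_prod]
  simp [Nat.add_assoc]

theorem DConvex.ncard_le (hC : DConvex (gridOrientation n m r c) C) (hne : C ≠ Set.univ)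
    (hrn : r + 1 < n) (hcm : c + 1 < m) (hr : 1 ≤ r) (hc : 1 ≤ c) :
    C.ncard ≤ (r + 1) * (c + 1) := by
  have hfour : 2 * 2 ≤ (r + 1) * (c + 1) := Nat.mul_le_mul (by omega) (by omega)
  obtain hsub | hnt := C.subsingleton_or_nontrivial
  · have := Set.ncard_le_one_iff_subsingleton.2 hsub
    omega
  have h := hC.gridConvex (strongConnected_gridOrientation hrn hcm hr hc) hnt hr hc
  by_cases hR : coords '' C ⊆ Set.Iic (r, c)
  · rw [← ncard_preimage_coords_Iic (n := n) (m := m) (by omega) (by omega)]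
    exact Set.ncard_le_ncard (Set.image_subset_iff.1 hR)
  by_cases hcell : coords '' C ⊆ cell r c
  · have hle := Set.ncard_le_ncard hcell (Set.finite_Icc _ _)
    rw [Set.ncard_image_of_injective _ coords_injective] at hle
    rw [ncard_cell] at hle
    exact hle.trans hfour
  · exact absurd (eq_univ_of_lt_imp_mem_image_coords fun _ =>
      h.mem_of_lt hrn hcm hr hc hR hcell) hne

end ConvexSets

theorem ab_mem_strongConvexitySpectrum_grid_general (n m a b : ℕ) (ha2 : 2 ≤ a) (han : a < n)
    (hb2 : 2 ≤ b) (hbm : b < m) : a * b ∈ strongConvexitySpectrum (gridGraph n m) := by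
  obtain ⟨r, rfl⟩ := Nat.exists_eq_add_of_le' (one_le_two.trans ha2)
  obtain ⟨c, rfl⟩ := Nat.exists_eq_add_of_le' (one_le_two.trans hb2)
  have hr : 1 ≤ r := Nat.le_of_succ_le_succ ha2
  have hc : 1 ≤ c := Nat.le_of_succ_le_succ hb2
  refine ⟨gridOrientation n m r c, isOrientation_gridOrientation n m r c,
    strongConnected_gridOrientation han hbm hr hc, IsGreatest.csSup_eq ⟨?_, ?_⟩⟩
  · refine ⟨coords ⁻¹' Set.Iic (r, c), dConvex_preimage_Iic (by omega) (by omega) hr hc, ?_,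
      ncard_preimage_coords_Iic (by omega) (by omega)⟩
    refine (Set.ne_univ_iff_exists_notMem _).2 ⟨(⟨r + 1, han⟩, ⟨c, by omega⟩), fun h => ?_⟩
    exact r.lt_irrefl h.1
  · rintro _ ⟨C, hC, hne, rfl⟩
    exact hC.ncard_le hne han hbm hr hc

/-- Realizable values `ab` in the strong convexity spectrum of `P_n □ P_m`. -/
theorem ab_mem_strongConvexitySpectrum_grid (n m : ℕ) (hn : 4 ≤ n) (hm : 4 ≤ m)
    (a b : ℕ) (ha2 : 2 ≤ a) (han : a ≤ n - 1) (hb2 : 2 ≤ b) (hbm : b ≤ m - 1) :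
    a * b ∈ strongConvexitySpectrum (gridGraph n m) :=
  ab_mem_strongConvexitySpectrum_grid_general n m a b ha2 (by omega) hb2 (by omega)
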